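/- arXiv:1408.5683 — 8 statements merged into one kernel-verified Lean document; each statement's English description precedes it below -/
import Mathlib

section
/- Let A be a unital C*-algebra and let u, v ∈ A be star-normal elements (u·u* = u*·u and v·v* = v*·v). If u·v = 0, then u*·v = 0, v·u* = 0, v*·u = 0, u·v* = 0, and v·u = 0. -/
/-!
If `u` is normal then `u * v` and `star u * v` have the same square modulus
`star v * (star u * u) * v`, so one vanishes exactly when the other does. Combining this with
`star (u * v) = star v * star u` moves a vanishing product through all six forms.
-/

/-- A proper involution: `star x * x` vanishes only at `x = 0`. It isolates the algebraic content of
the C⋆-identity, with no reference to a norm. -/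
class IsProperStar (A : Type*) [Mul A] [Zero A] [Star A] : Prop where
  eq_zero_of_star_mul_self_eq_zero {x : A} : star x * x = 0 → x = 0

instance IsProperStar.of_cstarRing {A : Type*} [NonUnitalNormedRing A] [StarRing A] [CStarRing A] :
    IsProperStar A where
  eq_zero_of_star_mul_self_eq_zero := (CStarRing.star_mul_self_eq_zero_iff _).mp

theorem star_mul_self_star_mul_of_isStarNormal {A : Type*} [Semigroup A] [StarMul A]
    (u v : A) [IsStarNormal u] :
    star (star u * v) * (star u * v) = star (u * v) * (u * v) :=
  calc star (star u * v) * (star u * v)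
      = star v * (u * star u) * v := by simp only [star_mul, star_star, mul_assoc]
    _ = star v * (star u * u) * v := by rw [star_comm_self']
    _ = star (u * v) * (u * v) := by simp only [star_mul, mul_assoc]

namespace IsProperStar

theorem star_mul_self_eq_zero_iff {A : Type*} [MulZeroClass A] [Star A] [IsProperStar A] {x : A} :
    star x * x = 0 ↔ x = 0 :=
  ⟨eq_zero_of_star_mul_self_eq_zero, fun hx => by rw [hx, mul_zero]⟩

variable {A : Type*} [NonUnitalSemiring A] [StarRing A] [IsProperStar A] {u v : A}

theorem star_mul_eq_zero_iff_of_isStarNormal [IsStarNormal u] : star u * v = 0 ↔ u * v = 0 := by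
  rw [← star_mul_self_eq_zero_iff, star_mul_self_star_mul_of_isStarNormal,
    star_mul_self_eq_zero_iff]

theorem mul_star_eq_zero_iff_of_isStarNormal [IsStarNormal v] : u * star v = 0 ↔ u * v = 0 :=
  calc u * star v = 0
      ↔ v * star u = 0 := by rw [← star_eq_zero, star_mul, star_star]
    _ ↔ star v * star u = 0 := star_mul_eq_zero_iff_of_isStarNormal.symm
    _ ↔ u * v = 0 := by rw [← star_mul, star_eq_zero]

theorem mul_eq_zero_comm_of_isStarNormal [IsStarNormal u] [IsStarNormal v] :
    u * v = 0 ↔ v * u = 0 :=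
  calc u * v = 0
      ↔ star u * v = 0 := star_mul_eq_zero_iff_of_isStarNormal.symm
    _ ↔ star v * u = 0 := by rw [← star_eq_zero, star_mul, star_star]
    _ ↔ v * u = 0 := star_mul_eq_zero_iff_of_isStarNormal

end IsProperStar

open IsProperStar in
theorem stmt_0_general {A : Type*} [NonUnitalSemiring A] [StarRing A] [IsProperStar A]
    (u v : A) [IsStarNormal u] [IsStarNormal v] (h : u * v = 0) :
    star u * v = 0 ∧ v * star u = 0 ∧ star v * u = 0 ∧ u * star v = 0 ∧ v * u = 0 := by
  have hvu : v * u = 0 := mul_eq_zero_comm_of_isStarNormal.mp h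
  exact ⟨star_mul_eq_zero_iff_of_isStarNormal.mpr h, mul_star_eq_zero_iff_of_isStarNormal.mpr hvu,
    star_mul_eq_zero_iff_of_isStarNormal.mpr hvu, mul_star_eq_zero_iff_of_isStarNormal.mpr h, hvu⟩

/-- If `u` and `v` are star-normal elements of a unital C*-algebra with `u * v = 0`,
then all related products vanish. -/
theorem stmt_0 {A : Type*} [NormedRing A] [StarRing A] [CStarRing A]
    [CompleteSpace A] [NormedAlgebra ℂ A] [StarModule ℂ A]
    (u v : A) (hu : u * star u = star u * u) (hv : v * star v = star v * v)
    (h : u * v = 0) :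
    star u * v = 0 ∧ v * star u = 0 ∧ star v * u = 0 ∧ u * star v = 0 ∧ v * u = 0 := by
  have : IsStarNormal u := ⟨hu.symm⟩
  have : IsStarNormal v := ⟨hv.symm⟩
  exact stmt_0_general u v h
end

section
/- Let n ≥ 5 be an integer coprime to 6, and let W be the Coxeter group of the Coxeter matrix M on the index set {0,1,2} with M(i,i) = 1, M(0,1) = M(1,0) = 3, M(0,2) = M(2,0) = 2, M(1,2) = M(2,1) = n, with simple reflections a = s₀, b = s₁, c = s₂. Then in W the element b·c·b is distinct from each of the four elements a·b·a, a·b·c, c·b·a, and c·b·c. -/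
/-!
In the geometric representation of a Coxeter group, on the real vector space with one basis vector
per generator, the reflection `s i` negates the `i`-th basis vector and changes only the `i`-th
coordinate, and `s i * s j` has order exactly `M i j`. The first property shows that `s i` does not
lie in a subgroup generated by other simple reflections. So `bcb = abc` and `bcb = cba` would put
`a` in `⟨b, c⟩`, and `bcb = aba` would put `c` in `⟨a, b⟩`. Finally `bcb = cbc` would give
`(bc)³ = 1`, so that the order of `bc` would divide `3`.
-/

open Module Real

section TwoReflections

variable {V : Type*} [AddCommGroup V] [Module ℝ V] {x y : V} {f g : Dual ℝ V}

theorem reflection_sin_smul_add_sin_smul (hg : g y = 2) {θ : ℝ} (hgx : g x = -2 * cos θ) (φ : ℝ) :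
    reflection hg (sin (φ + θ) • x + sin φ • y) = sin (φ + θ) • x + sin (φ + 2 * θ) • y := by
  have sin_recurrence : sin (φ + 2 * θ) = 2 * cos θ * sin (φ + θ) - sin φ := by
    have h := sin_add_sin (φ + 2 * θ) φ
    ring_nf at h ⊢
    linear_combination h
  rw [reflection_apply, sin_recurrence]
  simp only [map_add, map_smul, hg, hgx, smul_eq_mul]
  module

theorem reflection_mul_reflection_pow_sin_smul_add_sin_smul (hf : f x = 2) (hg : g y = 2) {θ : ℝ}
    (hfy : f y = -2 * cos θ) (hgx : g x = -2 * cos θ) (k : ℕ) (φ : ℝ) :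
    ((reflection hf * reflection hg) ^ k) (sin (φ + θ) • x + sin φ • y) =
      sin (φ + k * (2 * θ) + θ) • x + sin (φ + k * (2 * θ)) • y := by
  induction k generalizing φ with
  | zero => simp
  | succ k ih =>
    have rotate : (reflection hf * reflection hg) (sin (φ + θ) • x + sin φ • y) =
        sin (φ + 2 * θ + θ) • x + sin (φ + 2 * θ) • y := by
      have h := reflection_sin_smul_add_sin_smul hf hfy (φ + θ)
      rw [LinearEquiv.mul_apply, reflection_sin_smul_add_sin_smul hg hgx, add_comm (_ • x)]
      ring_nf at h ⊢
      rw [h, add_comm]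
    rw [pow_succ, LinearEquiv.mul_apply, rotate, ih]
    push_cast
    ring_nf

theorem exists_eq_smul_add_smul_add_of_sin_ne_zero (hf : f x = 2) (hg : g y = 2) {θ : ℝ}
    (hfy : f y = -2 * cos θ) (hgx : g x = -2 * cos θ) (hθ : sin θ ≠ 0) (z : V) :
    ∃ (a b : ℝ) (u : V), f u = 0 ∧ g u = 0 ∧ z = a • x + b • y + u := by
  let a := (f z + cos θ * g z) / (2 * sin θ ^ 2)
  let b := (g z + cos θ * f z) / (2 * sin θ ^ 2)
  refine ⟨a, b, z - (a • x + b • y), ?_, ?_, by abel⟩ <;>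
  · simp only [map_sub, map_add, map_smul, smul_eq_mul, hf, hg, hfy, hgx, a, b]
    field_simp
    rw [sin_sq]
    ring

theorem sin_pi_div_natCast_ne_zero {m : ℕ} (hm : 2 ≤ m) : sin (π / m) ≠ 0 := by
  have : (1 : ℝ) < m := by exact_mod_cast hm
  exact (sin_pos_of_pos_of_lt_pi (by positivity) (div_lt_self pi_pos this)).ne'

theorem reflection_mul_reflection_pow_eq_one (hf : f x = 2) (hg : g y = 2) {m : ℕ} (hm : 2 ≤ m)
    (hfy : f y = -2 * cos (π / m)) (hgx : g x = -2 * cos (π / m)) :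
    (reflection hf * reflection hg) ^ m = 1 := by
  have sin_ne_zero := sin_pi_div_natCast_ne_zero hm
  have full_turn : (m : ℝ) * (2 * (π / m)) = 2 * π := by field_simp
  have fixes_combination (φ : ℝ) :=
    reflection_mul_reflection_pow_sin_smul_add_sin_smul hf hg hfy hgx m φ
  simp only [full_turn, add_right_comm _ (2 * π), sin_add_two_pi] at fixes_combination
  have fixes_x : ((reflection hf * reflection hg) ^ m) x = x := by
    simpa [sin_ne_zero] using fixes_combination 0
  have fixes_y : ((reflection hf * reflection hg) ^ m) y = y := by
    simpa [sin_ne_zero] using fixes_combination (-(π / m))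
  ext z
  obtain ⟨a, b, u, hfu, hgu, rfl⟩ :=
    exists_eq_smul_add_smul_add_of_sin_ne_zero hf hg hfy hgx sin_ne_zero z
  have fixes_u : ((reflection hf * reflection hg) ^ m) u = u := by
    rw [reflection_mul_reflection_pow_apply]
    simp [hfu, hgu]
  simp [fixes_x, fixes_y, fixes_u]

theorem dvd_of_reflection_mul_reflection_pow_eq_one (hxy : LinearIndependent ℝ ![x, y])
    (hf : f x = 2) (hg : g y = 2) {m : ℕ} (hm : 2 ≤ m)
    (hfy : f y = -2 * cos (π / m)) (hgx : g x = -2 * cos (π / m)) {k : ℕ}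
    (hk : (reflection hf * reflection hg) ^ k = 1) : m ∣ k := by
  have sin_ne_zero := sin_pi_div_natCast_ne_zero hm
  have rotated := reflection_mul_reflection_pow_sin_smul_add_sin_smul hf hg hfy hgx k 0
  simp only [hk, LinearEquiv.coe_one, id_eq, zero_add] at rotated
  obtain ⟨coeff_x, coeff_y⟩ := hxy.eq_of_pair rotated
  have cos_eq_one : cos (k * (2 * (π / m))) = 1 := by
    rw [sin_add, ← coeff_y, sin_zero, zero_mul, zero_add] at coeff_x
    exact (mul_eq_right₀ sin_ne_zero).mp coeff_x.symm
  obtain ⟨l, hl⟩ := (cos_eq_one_iff _).mp cos_eq_one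
  have : (k : ℝ) = m * l := by
    field_simp at hl
    linear_combination -hl
  exact Int.natCast_dvd_natCast.mp ⟨l, by exact_mod_cast this⟩

theorem orderOf_reflection_mul_reflection (hxy : LinearIndependent ℝ ![x, y])
    (hf : f x = 2) (hg : g y = 2) {m : ℕ} (hm : 2 ≤ m)
    (hfy : f y = -2 * cos (π / m)) (hgx : g x = -2 * cos (π / m)) :
    orderOf (reflection hf * reflection hg) = m :=
  Nat.dvd_antisymm
    (orderOf_dvd_of_pow_eq_one (reflection_mul_reflection_pow_eq_one hf hg hm hfy hgx))
    (dvd_of_reflection_mul_reflection_pow_eq_one hxy hf hg hm hfy hgx (pow_orderOf_eq_one _))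

theorem orderOf_reflection_mul_reflection_eq_zero (hxy : LinearIndependent ℝ ![x, y])
    (hf : f x = 2) (hg : g y = 2) (h : f y * g x = 4) :
    orderOf (reflection hf * reflection hg) = 0 := by
  refine orderOf_eq_zero_iff'.mpr fun k hk hpow ↦ ?_
  have x_expansion : (1 : ℝ) • x + (0 : ℝ) • y = (2 * k + 1 : ℝ) • x + (k * -g x) • y := by
    have hx := reflection_mul_reflection_pow_apply_self hf hg k 2 (by rw [h]; norm_num)
    simp only [hpow, LinearEquiv.coe_one, id_eq, Polynomial.Chebyshev.S_eval_two] at hx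
    rw [one_smul, zero_smul, add_zero]
    refine hx.trans ?_
    push_cast
    module
  have coeff_y := (hxy.eq_of_pair x_expansion).2
  have hk_ne_zero : (k : ℝ) ≠ 0 := by exact_mod_cast hk.ne'
  have hgx_ne_zero : g x ≠ 0 := by
    intro hgx
    simp [hgx] at h
  simp [hk_ne_zero, hgx_ne_zero] at coeff_y

end TwoReflections

theorem linearIndependent_single_pair (R : Type*) [Semiring R] {ι : Type*} {i j : ι} (hij : i ≠ j) :
    LinearIndependent R ![(Finsupp.single i 1 : ι →₀ R), Finsupp.single j 1] := by
  have h := (Finsupp.linearIndependent_single_one R ι).comp ![i, j] (by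
    simpa [Function.Injective, Fin.forall_fin_two] using ⟨hij, hij.symm⟩)
  convert h using 1
  ext l : 1
  fin_cases l <;> rfl

section GeometricRepresentation

variable {B : Type*} (M : CoxeterMatrix B)

/-- The coroot of `i` in the geometric representation on `B →₀ ℝ`, whose simple roots are the
standard basis vectors: it pairs with the root of `j` to `-2 cos (π / M i j)`. When `M i j = 0`,
which encodes infinite order, the convention `π / 0 = 0` yields the intended value `-2`. -/
noncomputable def simpleCoroot (i : B) : Dual ℝ (B →₀ ℝ) :=
  Finsupp.linearCombination ℝ fun j ↦ -2 * cos (π / M i j)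

theorem simpleCoroot_single (i j : B) :
    simpleCoroot M i (Finsupp.single j 1) = -2 * cos (π / M i j) := by
  simp [simpleCoroot]

theorem simpleCoroot_single_self (i : B) : simpleCoroot M i (Finsupp.single i 1) = 2 := by
  simp [simpleCoroot_single]

/-- The reflection by which the `i`-th generator acts in the geometric representation. -/
noncomputable def simpleReflection (i : B) : (B →₀ ℝ) ≃ₗ[ℝ] (B →₀ ℝ) :=
  reflection (simpleCoroot_single_self M i)

theorem simpleReflection_single_self (i : B) :
    simpleReflection M i (Finsupp.single i 1) = -Finsupp.single i 1 :=
  reflection_apply_self (simpleCoroot_single_self M i)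

theorem simpleReflection_apply_apply_of_ne {i j : B} (h : i ≠ j) (v : B →₀ ℝ) :
    simpleReflection M i v j = v j := by
  simp [simpleReflection, reflection_apply, h]

theorem orderOf_simpleReflection_mul_simpleReflection (i j : B) :
    orderOf (simpleReflection M i * simpleReflection M j) = M i j := by
  obtain rfl | hij := eq_or_ne i j
  · rw [M.diagonal, orderOf_eq_one_iff]
    exact LinearEquiv.ext (involutive_reflection (simpleCoroot_single_self M i))
  have independent := linearIndependent_single_pair ℝ hij
  have hij_coroot := simpleCoroot_single M i j
  have hji_coroot := simpleCoroot_single M j i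
  rw [M.symmetric j i] at hji_coroot
  obtain infinite | finite := eq_or_ne (M i j) 0
  · rw [infinite]
    refine orderOf_reflection_mul_reflection_eq_zero independent _ _ ?_
    rw [hij_coroot, hji_coroot, infinite]
    norm_num
  · have two_le : 2 ≤ M i j := by
      have := M.off_diagonal i j hij
      omega
    exact orderOf_reflection_mul_reflection independent _ _ two_le hij_coroot hji_coroot

variable {M} {W : Type*} [Group W] (cs : CoxeterSystem M W)

/-- The geometric (Tits) representation of a Coxeter group on `B →₀ ℝ`. -/
noncomputable def geometricRepresentation : W →* (B →₀ ℝ) ≃ₗ[ℝ] (B →₀ ℝ) :=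
  cs.lift ⟨simpleReflection M, fun i j ↦ by
    rw [← orderOf_simpleReflection_mul_simpleReflection]; exact pow_orderOf_eq_one _⟩

theorem geometricRepresentation_simple (i : B) :
    geometricRepresentation cs (cs.simple i) = simpleReflection M i :=
  cs.lift_apply_simple _ i

theorem orderOf_simple_mul_simple (i j : B) : orderOf (cs.simple i * cs.simple j) = M i j := by
  refine Nat.dvd_antisymm (orderOf_dvd_of_pow_eq_one (cs.simple_mul_simple_pow i j)) ?_
  simpa only [map_mul, geometricRepresentation_simple,
    orderOf_simpleReflection_mul_simpleReflection]
    using orderOf_map_dvd (geometricRepresentation cs) (cs.simple i * cs.simple j)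

theorem geometricRepresentation_apply_apply_of_mem_closure {J : Set B} {i : B} (hi : i ∉ J) {w : W}
    (hw : w ∈ Subgroup.closure (cs.simple '' J)) (v : B →₀ ℝ) :
    geometricRepresentation cs w v i = v i := by
  induction hw using Subgroup.closure_induction generalizing v with
  | mem _ hw =>
    obtain ⟨j, hj, rfl⟩ := hw
    rw [geometricRepresentation_simple]
    exact simpleReflection_apply_apply_of_ne M (ne_of_mem_of_not_mem hj hi) v
  | one => simp
  | mul w₁ w₂ _ _ ih₁ ih₂ => rw [map_mul, LinearEquiv.mul_apply, ih₁, ih₂]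
  | inv w _ ih =>
    rw [← ih, ← LinearEquiv.mul_apply, ← map_mul, mul_inv_cancel, map_one, LinearEquiv.coe_one,
      id_eq]

theorem simple_mem_closure_image_simple_iff {J : Set B} {i : B} :
    cs.simple i ∈ Subgroup.closure (cs.simple '' J) ↔ i ∈ J := by
  refine ⟨fun h ↦ ?_, fun h ↦ Subgroup.subset_closure (Set.mem_image_of_mem _ h)⟩
  by_contra hi
  have fixed := geometricRepresentation_apply_apply_of_mem_closure cs hi h (Finsupp.single i 1)
  rw [geometricRepresentation_simple, simpleReflection_single_self] at fixed
  norm_num at fixed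

end GeometricRepresentation

theorem mul_pow_three_eq_one_of_braid {G : Type*} [Monoid G] {b c : G} (hb : b * b = 1)
    (hc : c * c = 1) (h : b * c * b = c * b * c) : (b * c) ^ 3 = 1 :=
  calc (b * c) ^ 3 = b * c * b * (c * b * c) := by simp only [pow_three, mul_assoc]
    _ = c * b * (c * c) * b * c := by simp only [h, mul_assoc]
    _ = 1 := by rw [hc, mul_one, mul_assoc c, hb, mul_one, hc]

theorem coxeterMatrix_eq_three_of_braid {B W : Type*} [Group W] {M : CoxeterMatrix B}
    (cs : CoxeterSystem M W) {j k : B} (hjk : j ≠ k)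
    (h : cs.simple j * cs.simple k * cs.simple j = cs.simple k * cs.simple j * cs.simple k) :
    M j k = 3 := by
  have order_dvd : M j k ∣ 3 := by
    rw [← orderOf_simple_mul_simple cs]
    exact orderOf_dvd_of_pow_eq_one (mul_pow_three_eq_one_of_braid
      (cs.simple_mul_simple_self j) (cs.simple_mul_simple_self k) h)
  exact ((Nat.dvd_prime Nat.prime_three).mp order_dvd).resolve_left (M.off_diagonal j k hjk)

theorem stmt_2_general {B W : Type*} [Group W] {M : CoxeterMatrix B} (cs : CoxeterSystem M W)
    {i j k : B} (hij : i ≠ j) (hik : i ≠ k) (hjk : j ≠ k) (h : M j k ≠ 3) :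
    let a : W := cs.simple i
    let b : W := cs.simple j
    let c : W := cs.simple k
    b * c * b ≠ a * b * a ∧ b * c * b ≠ a * b * c ∧
    b * c * b ≠ c * b * a ∧ b * c * b ≠ c * b * c := by
  intro a b c
  let P := Subgroup.closure (cs.simple '' {i, j})
  let Q := Subgroup.closure (cs.simple '' {j, k})
  have haP : a ∈ P := (simple_mem_closure_image_simple_iff cs).mpr (by simp)
  have hbP : b ∈ P := (simple_mem_closure_image_simple_iff cs).mpr (by simp)
  have hcP : c ∉ P :=
    (simple_mem_closure_image_simple_iff cs).not.mpr (by simp [hik.symm, hjk.symm])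
  have haQ : a ∉ Q :=
    (simple_mem_closure_image_simple_iff cs).not.mpr (by simp [hij, hik])
  have hbQ : b ∈ Q := (simple_mem_closure_image_simple_iff cs).mpr (by simp)
  have hcQ : c ∈ Q := (simple_mem_closure_image_simple_iff cs).mpr (by simp)
  have hbcbQ : b * c * b ∈ Q := mul_mem (mul_mem hbQ hcQ) hbQ
  refine ⟨fun heq ↦ hcP ?_, fun heq ↦ haQ ?_, fun heq ↦ haQ ?_,
    fun heq ↦ h (coxeterMatrix_eq_three_of_braid cs hjk heq)⟩
  · have : b * c * b ∈ P := heq ▸ mul_mem (mul_mem haP hbP) haP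
    rwa [P.mul_mem_cancel_right hbP, P.mul_mem_cancel_left hbP] at this
  · rwa [heq, Q.mul_mem_cancel_right hcQ, Q.mul_mem_cancel_right hbQ] at hbcbQ
  · rwa [heq, Q.mul_mem_cancel_left (mul_mem hcQ hbQ)] at hbcbQ

/-- In the Coxeter group with parameters `(2,3,n)`, `n ≥ 5` coprime to `6`,
the element `b*c*b` differs from `a*b*a`, `a*b*c`, `c*b*a` and `c*b*c`. -/
theorem stmt_2 (n : ℕ) (hn : 5 ≤ n) (hcop : Nat.Coprime n 6)
    (M : CoxeterMatrix (Fin 3))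
    (h01 : M 0 1 = 3) (h02 : M 0 2 = 2) (h12 : M 1 2 = n) :
    let a : M.Group := M.simple 0
    let b : M.Group := M.simple 1
    let c : M.Group := M.simple 2
    b * c * b ≠ a * b * a ∧ b * c * b ≠ a * b * c ∧
    b * c * b ≠ c * b * a ∧ b * c * b ≠ c * b * c :=
  stmt_2_general M.toCoxeterSystem (by decide) (by decide) (by decide) (by omega)
end

section
/- Let l ≥ 2 and let 3 ≤ n₁ < n₂ < ⋯ < n_l be integers. Let Γ = C_{n₁} ∗ C_{n₂} ∗ ⋯ ∗ C_{n_l} be the free product of the cyclic groups C_{n_i} = ⟨a_i | a_i^{n_i} = 1⟩, with each a_i viewed as an element of Γ via the canonical embedding. Then for every non-cancelling sequence (g₁, …, g_{n₁−1}) of letters of length n₁ − 1 and every index d with 2 ≤ d ≤ l, the product g₁·g₂·⋯·g_{n₁−1} is not equal to a_d and not equal to a_d⁻¹. -/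
/-!
In a non-cancelling product of letters `a i ^ ±1`, adjacent letters from the same factor are equal.
Collapsing each run of equal letters `x, …, x` to a power `x ^ r` therefore gives the normal form,
as long as these powers are nontrivial. A product of length `k` that lands in a single factor has
only one run, so it is `x ^ k`. The equation `x ^ k = a d ^ ±1` puts `x` in the factor `d`, hence
`x = a d ^ ±1` and `a d ^ (k - 1) = 1` or `a d ^ (k + 1) = 1`.
-/

/-- The canonical generator of the `i`-th factor of the free product of cyclic groups
`C_{n 0} ∗ ⋯ ∗ C_{n (l-1)}` (the letter `aᵢ`). -/
def freeProdCyclicGen {l : ℕ} (n : Fin l → ℕ) (i : Fin l) :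
    Monoid.CoprodI (fun i : Fin l => Multiplicative (ZMod (n i))) :=
  Monoid.CoprodI.of (M := fun i : Fin l => Multiplicative (ZMod (n i)))
    (Multiplicative.ofAdd (1 : ZMod (n i)))

section Monoid

open Monoid.CoprodI

variable {ι : Type*} {M : ι → Type*} [∀ i, Monoid (M i)]

theorem index_eq_of_of_eq_of {i j : ι} {x : M i} {y : M j} (hx : x ≠ 1)
    (h : (of x : Monoid.CoprodI M) = of y) : i = j := by
  classical
  by_contra hij
  apply hx
  let retraction : Monoid.CoprodI M →* M i := lift (Pi.mulSingle i (MonoidHom.id (M i)))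
  calc x = retraction (of x) := (of_leftInverse i x).symm
    _ = retraction (of y) := by rw [h]
    _ = 1 := by rw [lift_of, Pi.mulSingle_eq_of_ne (Ne.symm hij), MonoidHom.one_apply]

theorem word_prod_injective : Function.Injective (Word.prod : Word M → Monoid.CoprodI M) := by
  classical exact Word.equiv.symm.injective

theorem eq_empty_of_of_mul_prod_eq_of {i j : ι} {x : M i} {y : M j} {w : Word M} (hx : x ≠ 1)
    (hw : w.fstIdx ≠ some i) (h : of x * w.prod = of y) : w = Word.empty := by
  rw [← Word.prod_cons i x w hx hw] at h
  by_cases hy : y = 1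
  · have hcons : Word.cons x w hw hx = Word.empty :=
      word_prod_injective (by rw [h, hy, map_one, Word.prod_empty])
    exact absurd (congrArg Word.toList hcons) (List.cons_ne_nil _ _)
  · have hempty : (Word.empty : Word M).fstIdx ≠ some j := nofun
    have hcons : Word.cons x w hw hx = Word.cons y Word.empty hempty hy :=
      word_prod_injective (by rw [h, Word.prod_cons, Word.prod_empty, mul_one])
    exact Word.ext (List.cons.inj (congrArg Word.toList hcons)).2

theorem exists_prod_eq_of_pow_mul_word_prod {x : Σ i, M i} {L : List (Σ i, M i)}
    (hchain : (x :: L).IsChain fun y z => y.1 = z.1 → y = z)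
    (hpow : ∀ y ∈ L, ∀ m ≠ 0, m ≤ L.length → y.2 ^ m ≠ 1) :
    ∃ (r : ℕ) (w : Word M), r ≤ L.length ∧ w.fstIdx ≠ some x.1 ∧
      ((x :: L).map fun y => of y.2).prod = of (x.2 ^ (r + 1)) * w.prod ∧
      (w = Word.empty → L = List.replicate r x) := by
  induction L generalizing x with
  | nil => exact ⟨0, Word.empty, le_rfl, nofun, by simp, fun _ => rfl⟩
  | cons y L ih =>
    rw [List.isChain_cons_cons] at hchain
    obtain ⟨r, w, hr, hw, hprod, hempty⟩ := ih hchain.2 fun z hz m hm hmL =>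
      hpow z (List.mem_cons_of_mem y hz) m hm (hmL.trans (Nat.le_succ _))
    rw [List.map_cons, List.prod_cons, hprod]
    by_cases hxy : x.1 = y.1
    · obtain rfl := hchain.1 hxy
      refine ⟨r + 1, w, Nat.succ_le_succ hr, hw, ?_, fun h => ?_⟩
      · rw [← mul_assoc, ← map_mul, ← pow_succ']
      · rw [hempty h, List.replicate_succ]
    · have hy : y.2 ^ (r + 1) ≠ 1 :=
        hpow y List.mem_cons_self (r + 1) r.succ_ne_zero (Nat.succ_le_succ hr)
      refine ⟨0, Word.cons (y.2 ^ (r + 1)) w hw hy, Nat.zero_le _, ?_, ?_, fun h => ?_⟩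
      · rw [Word.fstIdx_cons]
        exact fun h => hxy (Option.some.inj h).symm
      · rw [Word.prod_cons, zero_add, pow_one]
      · exact absurd (congrArg Word.toList h) (List.cons_ne_nil _ _)

theorem exists_eq_replicate_of_prod_eq_of {L : List (Σ i, M i)} (hL : L ≠ [])
    (hchain : L.IsChain fun y z => y.1 = z.1 → y = z)
    (hpow : ∀ y ∈ L, ∀ m ≠ 0, m ≤ L.length → y.2 ^ m ≠ 1) {j : ι} {z : M j}
    (hprod : (L.map fun y => of y.2).prod = of z) : ∃ x, L = List.replicate L.length x := by
  obtain ⟨x, L, rfl⟩ := List.exists_cons_of_ne_nil hL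
  obtain ⟨r, w, hr, hw, hnormal, hempty⟩ :=
    exists_prod_eq_of_pow_mul_word_prod hchain fun y hy m hm hmL =>
      hpow y (List.mem_cons_of_mem x hy) m hm (hmL.trans (Nat.le_succ _))
  have hx : x.2 ^ (r + 1) ≠ 1 :=
    hpow x List.mem_cons_self (r + 1) r.succ_ne_zero (Nat.succ_le_succ hr)
  have hLr : L = List.replicate r x :=
    hempty (eq_empty_of_of_mul_prod_eq_of hx hw (hnormal.symm.trans hprod))
  exact ⟨x, by rw [hLr, List.length_cons, List.length_replicate, List.replicate_succ]⟩

end Monoid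

section Group

open Monoid.CoprodI

theorem pow_eq_one_or_pow_eq_one_of_pow_succ_eq {G : Type*} [Group G] {a x z : G} {k : ℕ}
    (hx : x = a ∨ x = a⁻¹) (hz : z = a ∨ z = a⁻¹) (h : x ^ (k + 1) = z) :
    a ^ k = 1 ∨ a ^ (k + 2) = 1 := by
  have hxz : z = x ∨ z = x⁻¹ := by
    rcases hx with rfl | rfl <;> simpa [or_comm] using hz
  have hpow (m : ℕ) (hm : x ^ m = 1) : a ^ m = 1 := by
    rcases hx with rfl | rfl
    · exact hm
    · rwa [inv_pow, inv_eq_one] at hm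
  rcases hxz with rfl | rfl
  · exact Or.inl (hpow k (by rwa [pow_succ, mul_eq_right] at h))
  · exact Or.inr (hpow (k + 2) (by rw [pow_succ, h, inv_mul_cancel]))

variable {ι : Type*} {G : ι → Type*} [∀ i, Group (G i)]

/-- `x` is one of the letters `a i`, `(a i)⁻¹` of a free product of groups containing `a i : G i`;
it is kept as an element of its factor, so that the factor can be read off. -/
def IsLetter (a : ∀ i, G i) (x : Σ i, G i) : Prop :=
  x.2 = a x.1 ∨ x.2 = (a x.1)⁻¹

theorem IsLetter.eq_of_fst_eq {a : ∀ i, G i} {x y : Σ i, G i} (hx : IsLetter a x)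
    (hy : IsLetter a y) (hne : (of y.2 : Monoid.CoprodI G) ≠ (of x.2)⁻¹) (hxy : x.1 = y.1) :
    x = y := by
  obtain ⟨i, x⟩ := x
  obtain ⟨j, y⟩ := y
  obtain rfl : i = j := hxy
  have hyx : y ≠ x⁻¹ := fun h => hne (by rw [h, map_inv])
  have hx' : x = a i ∨ x = (a i)⁻¹ := hx
  have hy' : y = a i ∨ y = (a i)⁻¹ := hy
  rcases hx' with rfl | rfl <;> rcases hy' with rfl | rfl <;> simp_all

theorem IsLetter.pow_ne_one {a : ∀ i, G i} {x : Σ i, G i} (hx : IsLetter a x) {m : ℕ}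
    (ha : a x.1 ^ m ≠ 1) : x.2 ^ m ≠ 1 := by
  rcases hx with hx | hx
  · rwa [hx]
  · rwa [hx, inv_pow, inv_ne_one]

theorem exists_isLetter_of_eq_of {a : ∀ i, G i} {g : Monoid.CoprodI G}
    (hg : ∃ i, g = of (a i) ∨ g = (of (a i))⁻¹) : ∃ x, IsLetter a x ∧ g = of x.2 := by
  obtain ⟨i, hg | hg⟩ := hg
  · exact ⟨⟨i, a i⟩, Or.inl rfl, hg⟩
  · exact ⟨⟨i, (a i)⁻¹⟩, Or.inr rfl, by rw [hg, map_inv]⟩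

theorem prod_ne_of_isLetter {a : ∀ i, G i} {L : List (Σ i, G i)} (hL : 2 ≤ L.length)
    (hletter : ∀ x ∈ L, IsLetter a x) (hchain : L.IsChain fun y z => y.1 = z.1 → y = z)
    (hpow : ∀ i, ∀ m ≠ 0, m ≤ L.length → a i ^ m ≠ 1) {z : Σ i, G i} (hz : IsLetter a z)
    (hd : a z.1 ^ (L.length + 1) ≠ 1) : (L.map fun y => of y.2).prod ≠ of z.2 := by
  intro hprod
  have hpow' : ∀ y ∈ L, ∀ m ≠ 0, m ≤ L.length → y.2 ^ m ≠ 1 := fun y hy m hm hmL =>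
    (hletter y hy).pow_ne_one (hpow y.1 m hm hmL)
  obtain ⟨x, hLx⟩ := exists_eq_replicate_of_prod_eq_of
    (List.ne_nil_of_length_pos (by omega)) hchain hpow' hprod
  obtain ⟨k, hk⟩ : ∃ k, L.length = k + 1 := ⟨L.length - 1, by omega⟩
  have hxL : x ∈ L := by
    rw [hLx, hk]
    exact List.mem_replicate.2 ⟨k.succ_ne_zero, rfl⟩
  have hxz : (of (x.2 ^ (k + 1)) : Monoid.CoprodI G) = of z.2 := by
    rw [← hprod, hLx, hk, List.map_replicate, List.prod_replicate, map_pow]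
  have hindex : x.1 = z.1 :=
    index_eq_of_of_eq_of (hpow' x hxL (k + 1) k.succ_ne_zero hk.ge) hxz
  have hx := hletter x hxL
  obtain ⟨i, x⟩ := x
  obtain ⟨j, z⟩ := z
  obtain rfl : i = j := hindex
  rcases pow_eq_one_or_pow_eq_one_of_pow_succ_eq hx hz (of_injective i hxz) with h | h
  · exact hpow i k (by omega) (by omega) h
  · exact hd (by rwa [hk])

theorem stmt_7_general (a : ∀ i, G i) {k : ℕ} (hk : 2 ≤ k) (g : Fin k → Monoid.CoprodI G)
    (hletter : ∀ j, ∃ i, g j = of (a i) ∨ g j = (of (a i))⁻¹)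
    (hred : ∀ (j : ℕ) (hj : j + 1 < k), g ⟨j + 1, hj⟩ ≠ (g ⟨j, by omega⟩)⁻¹)
    (hpow : ∀ i, ∀ m ≠ 0, m ≤ k → a i ^ m ≠ 1) (d : ι) (hd : a d ^ (k + 1) ≠ 1) :
    (List.ofFn g).prod ≠ of (a d) ∧ (List.ofFn g).prod ≠ (of (a d))⁻¹ := by
  choose x hx hgx using fun j => exists_isLetter_of_eq_of (hletter j)
  have hchain : (List.ofFn x).IsChain fun y z => y.1 = z.1 → y = z :=
    List.isChain_ofFn.2 fun j hj =>
      (hx _).eq_of_fst_eq (hx _) (by simpa only [hgx] using hred j hj)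
  have hprod : List.ofFn g = (List.ofFn x).map fun y => of y.2 := by
    rw [List.map_ofFn]
    exact congrArg List.ofFn (funext hgx)
  have hne {z : G d} (hz : IsLetter a ⟨d, z⟩) : (List.ofFn g).prod ≠ of z := by
    rw [hprod]
    exact prod_ne_of_isLetter (by rwa [List.length_ofFn]) (List.forall_mem_ofFn_iff.2 hx) hchain
      (by rwa [List.length_ofFn]) hz (by rwa [List.length_ofFn])
  exact ⟨hne (Or.inl rfl), map_inv (of : G d →* _) (a d) ▸ hne (Or.inr rfl)⟩

end Group

theorem ofAdd_one_pow_ne_one {n m : ℕ} (hm : m ≠ 0) (hmn : m < n) :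
    Multiplicative.ofAdd (1 : ZMod n) ^ m ≠ 1 :=
  pow_ne_one_of_lt_orderOf hm (by rwa [orderOf_ofAdd_eq_addOrderOf, ZMod.addOrderOf_one])

/-- In the free product of cyclic groups `C_{n 0} ∗ ⋯ ∗ C_{n (l-1)}` with
`3 ≤ n 0 < n 1 < ⋯`, no non-cancelling product of `n 0 - 1` letters from the
symmetric generating set equals `a_d` or `a_d⁻¹` for `d ≠ 0`. -/
theorem stmt_7 (l : ℕ) (hl : 2 ≤ l) (n : Fin l → ℕ)
    (h3 : 3 ≤ n ⟨0, by omega⟩) (hmono : StrictMono n)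
    (g : Fin (n ⟨0, by omega⟩ - 1) →
      Monoid.CoprodI (fun i : Fin l => Multiplicative (ZMod (n i))))
    (hletter : ∀ j, ∃ i : Fin l,
      g j = freeProdCyclicGen n i ∨ g j = (freeProdCyclicGen n i)⁻¹)
    (hred : ∀ (j : ℕ) (hj : j + 1 < n ⟨0, by omega⟩ - 1),
      g ⟨j + 1, hj⟩ ≠ (g ⟨j, by omega⟩)⁻¹)
    (d : Fin l) (hd : 0 < (d : ℕ)) :
    (List.ofFn g).prod ≠ freeProdCyclicGen n d ∧
    (List.ofFn g).prod ≠ (freeProdCyclicGen n d)⁻¹ := by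
  have hmin (i : Fin l) : n ⟨0, by omega⟩ ≤ n i := hmono.monotone (Nat.zero_le i)
  have hlt : n ⟨0, by omega⟩ < n d := hmono hd
  exact stmt_7_general (fun i => Multiplicative.ofAdd (1 : ZMod (n i))) (by omega) g hletter hred
    (fun i m hm hmk => ofAdd_one_pow_ne_one hm (by have := hmin i; omega)) d
    (ofAdd_one_pow_ne_one (Nat.succ_ne_zero _) (by omega))
end

section
/- Let R be a star ring and a ∈ R with (star a)·a·a = a and a·a·(star a) = a. Then a·(star a) = (star a)·a and a·(star a)·a = a (i.e., a is a normal partial isometry). -/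
theorem commute_of_mul_mul_self_eq_of_mul_self_mul_eq {S : Type*} [Semigroup S] {a b : S}
    (hl : b * a * a = a) (hr : a * a * b = a) : Commute a b :=
  calc
    a * b = b * a * a * b := by rw [hl]
    _ = b * (a * a * b) := by simp only [mul_assoc]
    _ = b * a := by rw [hr]

theorem stmt_8_general {S : Type*} [Semigroup S] {a b : S}
    (hl : b * a * a = a) (hr : a * a * b = a) : a * b = b * a ∧ a * b * a = a := by
  have hcomm : a * b = b * a := commute_of_mul_mul_self_eq_of_mul_self_mul_eq hl hr
  exact ⟨hcomm, by rw [hcomm, hl]⟩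

/-- In a star ring, if `star a * a * a = a` and `a * a * star a = a`, then `a` is a
normal partial isometry. -/
theorem stmt_8 {R : Type*} [Ring R] [StarRing R] (a : R)
    (h1 : star a * a * a = a) (h2 : a * a * star a = a) :
    a * star a = star a * a ∧ a * star a * a = a :=
  stmt_8_general h1 h2
end

section
/- Let R be a star ring and a, g ∈ R such that a is normal (a·(star a) = (star a)·a), (star a)·a·a = a, g commutes with a·a and with (star a)·(star a), and a·a·g = a·g·a. Then a·g = g·a. -/
/-! Write `b` for `star a`. The element `b * a` is a left identity for `a`, so it equals
`b * b * (a * a)`, and hence `g` commutes with it. It is therefore also a left identity for `g * a`,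
which allows cancelling `a` on the left of `a * (a * g) = a * (g * a)`. -/

section Semigroup

variable {S : Type*} [Semigroup S] {a b g : S}

theorem mul_self_mul_mul_self_of_mul_mul_eq (hba : b * a * a = a) :
    b * b * (a * a) = b * a := by
  calc b * b * (a * a) = b * (b * a * a) := by simp only [mul_assoc]
    _ = b * a := by rw [hba]

theorem commute_mul_of_commute_mul_self (hba : b * a * a = a)
    (hgb : Commute g (b * b)) (hga : Commute g (a * a)) : Commute g (b * a) := by
  rw [← mul_self_mul_mul_self_of_mul_mul_eq hba]
  exact hgb.mul_right hga

theorem commute_of_commute_mul_of_mul_mul_eq (hba : b * a * a = a)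
    (hg : Commute g (b * a)) (hmid : a * a * g = a * g * a) : Commute a g := by
  calc a * g = b * a * a * g := by rw [hba]
    _ = b * (a * a * g) := by simp only [mul_assoc]
    _ = b * (a * g * a) := by rw [hmid]
    _ = b * a * g * a := by simp only [mul_assoc]
    _ = g * (b * a) * a := by rw [hg.eq]
    _ = g * (b * a * a) := mul_assoc g (b * a) a
    _ = g * a := by rw [hba]

theorem stmt_10_general (hba : b * a * a = a) (hga : Commute g (a * a))
    (hgb : Commute g (b * b)) (hmid : a * a * g = a * g * a) : Commute a g :=
  commute_of_commute_mul_of_mul_mul_eq hba (commute_mul_of_commute_mul_self hba hgb hga) hmid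

end Semigroup

/-- In a star ring, if `a` is normal with `star a * a * a = a`, and `g` commutes with
`a * a` and with `star a * star a`, and `a * a * g = a * g * a`, then `a * g = g * a`. -/
theorem stmt_10 {R : Type*} [Ring R] [StarRing R] (a g : R)
    (hnorm : a * star a = star a * a)
    (hpi : star a * a * a = a)
    (hg1 : g * (a * a) = a * a * g)
    (hg2 : g * (star a * star a) = star a * star a * g)
    (hmid : a * a * g = a * g * a) :
    a * g = g * a :=
  stmt_10_general hpi hg1 hg2 hmid
end

section
/- Let R be a star ring and x, y, z ∈ R such that star x = x·(y·z + z·y), x·x + y·z + z·y = 0, z·(star x) = 0, and y·(star x) = 0. Then x = 0. -/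
lemma mul_self_eq_zero_of_eq_mul {S : Type*} [SemigroupWithZero S] {a b w : S}
    (hab : a = b * w) (hwa : w * a = 0) : a * a = 0 :=
  calc
    a * a = b * w * a := by rw [← hab]
    _ = b * (w * a) := mul_assoc b w a
    _ = 0 := by rw [hwa, mul_zero]

theorem stmt_11_general {R : Type*} [NonUnitalSemiring R] [StarRing R] {x w : R}
    (hstar : star x = x * w) (hsum : x * x + w = 0) (hw : w * star x = 0) : x = 0 := by
  have star_sq : star x * star x = 0 := mul_self_eq_zero_of_eq_mul hstar hw
  have sq : x * x = 0 := by rwa [← star_mul, star_eq_zero] at star_sq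
  have w_eq_zero : w = 0 := by rwa [sq, zero_add] at hsum
  rwa [w_eq_zero, mul_zero, star_eq_zero] at hstar

/-- In a star ring, if `star x = x * (y*z + z*y)`, `x*x + y*z + z*y = 0`,
`z * star x = 0` and `y * star x = 0`, then `x = 0`. -/
theorem stmt_11 {R : Type*} [Ring R] [StarRing R] (x y z : R)
    (h1 : star x = x * (y * z + z * y))
    (h2 : x * x + y * z + z * y = 0)
    (h3 : z * star x = 0)
    (h4 : y * star x = 0) :
    x = 0 := by
  have hw : (y * z + z * y) * star x = 0 := by
    simp only [add_mul, mul_assoc, h3, h4, mul_zero, add_zero]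
  exact stmt_11_general h1 (by rwa [← add_assoc]) hw
end

section
/- Let R be a star ring, k ≥ 1 a natural number, and a, e ∈ R such that star e = e·e, a·e = ((star e)·a)^k, and e·a = (a·(star e))^k. Then a·(e·(star e)) = (e·(star e))·a. -/
theorem stmt_12_general {M : Type*} [Monoid M] (k : ℕ) (a e f : M)
    (h1 : a * e = (f * a) ^ k) (h2 : e * a = (a * f) ^ k) :
    a * (e * f) = (f * e) * a :=
  calc
    a * (e * f) = (f * a) ^ k * f := by rw [← mul_assoc, h1]
    _ = f * (a * f) ^ k := mul_pow_mul f a k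
    _ = (f * e) * a := by rw [← h2, mul_assoc]

/-- In a star ring, if `star e = e * e`, `a * e = (star e * a)^k` and
`e * a = (a * star e)^k` with `k ≥ 1`, then `a` commutes with `e * star e`. -/
theorem stmt_12 {R : Type*} [Ring R] [StarRing R] (k : ℕ) (hk : 1 ≤ k) (a e : R)
    (he : star e = e * e)
    (h1 : a * e = (star e * a) ^ k)
    (h2 : e * a = (a * star e) ^ k) :
    a * (e * star e) = (e * star e) * a := by
  have star_mul_eq : star e * e = e * star e := by rw [he, mul_assoc]
  exact star_mul_eq ▸ stmt_12_general k a e (star e) h1 h2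
end

section
/- Let R be a unital ring and a, b, c, g, h, k ∈ R such that h·a = b·g, h·c = b·k, h·b + b·h = 0, g·g + h·h + k·k = 1, g·h = 0, k·h = 0, and a·g + b·h + c·k = 0. Then b = 0. -/
section NonUnitalSemiring

variable {R : Type*} [NonUnitalSemiring R] {a b c g h k p z : R}

theorem mul_mul_eq_zero_of_add_eq_zero (hsum : a * g + b * p + c * k = 0)
    (hgz : g * z = 0) (hkz : k * z = 0) : b * p * z = 0 :=
  calc
    b * p * z = a * (g * z) + b * p * z + c * (k * z) := by
      rw [hgz, hkz, mul_zero, mul_zero, zero_add, add_zero]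
    _ = (a * g + b * p + c * k) * z := by simp only [add_mul, mul_assoc]
    _ = 0 := by rw [hsum, zero_mul]

theorem self_mul_mul_self_eq_zero_of_anticommute (hanti : h * b + b * h = 0)
    (hbhh : b * h * h = 0) : h * b * h = 0 :=
  calc
    h * b * h = h * b * h + b * h * h := by rw [hbhh, add_zero]
    _ = (h * b + b * h) * h := (add_mul ..).symm
    _ = 0 := by rw [hanti, zero_mul]

theorem mul_mul_self_add_mul_mul_self_eq_zero (hag : h * a = b * g) (hck : h * c = b * k)
    (hsum : a * g + p + c * k = 0) (hp : h * p = 0) : b * g * g + b * k * k = 0 :=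
  calc
    b * g * g + b * k * k = h * a * g + h * p + h * c * k := by rw [hag, hck, hp, add_zero]
    _ = h * (a * g + p + c * k) := by simp only [mul_add, mul_assoc]
    _ = 0 := by rw [hsum, mul_zero]

end NonUnitalSemiring

theorem stmt_16_general {R : Type*} [Semiring R] {a b c g h k : R}
    (hag : h * a = b * g) (hck : h * c = b * k) (hanti : h * b + b * h = 0)
    (hone : g * g + h * h + k * k = 1) (hgh : g * h = 0) (hkh : k * h = 0)
    (hsum : a * g + b * h + c * k = 0) : b = 0 := by
  have hbhh : b * h * h = 0 := mul_mul_eq_zero_of_add_eq_zero hsum hgh hkh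
  have hhbh : h * (b * h) = 0 := by
    rw [← mul_assoc, self_mul_mul_self_eq_zero_of_anticommute hanti hbhh]
  calc
    b = b * (g * g + h * h + k * k) := by rw [hone, mul_one]
    _ = b * g * g + b * k * k + b * h * h := by
      simp only [mul_add, ← mul_assoc, add_right_comm]
    _ = 0 := by rw [mul_mul_self_add_mul_mul_self_eq_zero hag hck hsum hhbh, hbhh, add_zero]

/-- The algebraic core of the paper's Lemma 6.2 on Coxeter groups: the displayed
relations in a unital ring force `b = 0`. -/
theorem stmt_16 {R : Type*} [Ring R] (a b c g h k : R)
    (h1 : h * a = b * g) (h2 : h * c = b * k)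
    (h3 : h * b + b * h = 0)
    (h4 : g * g + h * h + k * k = 1)
    (h5 : g * h = 0) (h6 : k * h = 0)
    (h7 : a * g + b * h + c * k = 0) :
    b = 0 :=
  stmt_16_general h1 h2 h3 h4 h5 h6 h7
end
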